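/- Local ergotropy of a noisy multi-site state decomposes through single-site marginals: let Λ be a quantum channel on d×d complex matrices, h a Hermitian d×d matrix, n ≥ 1, and ρ an n-site density matrix (indexed by Fin n → Fin d). Then ℰ_loc(Λ^{⊗n}(ρ); h^{(n)}) = Σ_{i<n} ℰ(Λ(ρ_i); h), where ρ_i is the i-th single-site reduced density matrix of ρ, given by (ρ_i) a b := Σ_{f : Fin n → Fin d, f i = a} ρ f (Function.update f i b). -/

import Mathlib

/-!
Everything happens at the level of one trace identity: for any matrices `Uᵢ` with `Uᵢ† Uᵢ = 1`,
`Tr[(⊗Uᵢ) Λ^{⊗n}(ρ) (⊗Uᵢ)† h^{(n)}] = ∑ᵢ Tr[Uᵢ Λ(ρᵢ) Uᵢ† h]` (`trace_local_energy`).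
Both sides are linear in `ρ`, and matrix units are product matrices, so it suffices to take `ρ` a
product (`trace_local_energy_prodMat`).  There the trace factorises over the sites, the `i`-th term
of `h^{(n)}` sees only site `i`, and each other site `j` contributes
`Tr[Uⱼ Λ(ρⱼ) Uⱼ†] = Tr[ρⱼ]`, which is exactly the factor that the partial trace produces
(`red_prodMat`).

Consequently the objective of the local ergotropy at `(U₁, …, Uₙ)` is a sum of `n` terms, the
`i`-th depending on `Uᵢ` only, and it remains to exchange the supremum over tuples with the sum
(`ciSup_pi_sum`).  This exchange needs the single-site objectives to be bounded above
(`bddAbove_ergo`), which holds since the entries of a unitary have modulus at most one.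
-/

open Matrix Filter Topology
open scoped ComplexOrder Kronecker

noncomputable section

/-- A density matrix: positive semidefinite with unit trace. -/
def IsDensity {n : Type*} [Fintype n] [DecidableEq n] (ρ : Matrix n n ℂ) : Prop :=
  ρ.PosSemidef ∧ ρ.trace = 1

/-- The ergotropy `ℰ(ρ;H) = ⨆_{U ∈ U(d)} (re Tr[ρH] − re Tr[U ρ U† H])`. -/
def ergo {n : Type*} [Fintype n] [DecidableEq n] (ρ H : Matrix n n ℂ) : ℝ :=
  ⨆ U : Matrix.unitaryGroup n ℂ,
    ((ρ * H).trace.re -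
      ((U : Matrix n n ℂ) * ρ * star (U : Matrix n n ℂ) * H).trace.re)

/-- `N`-fold tensor power of a `d × d` matrix:
`ρ^{⊗N} f g = ∏_{i<N} ρ (f i) (g i)`. -/
def tpow {d : ℕ} (ρ : Matrix (Fin d) (Fin d) ℂ) (N : ℕ) :
    Matrix (Fin N → Fin d) (Fin N → Fin d) ℂ :=
  Matrix.of fun f g => ∏ i, ρ (f i) (g i)

/-- Tensor product `ρ₁ ⊗ ⋯ ⊗ ρₙ` of `n` single-site matrices. -/
def prodMat {d n : ℕ} (ρs : Fin n → Matrix (Fin d) (Fin d) ℂ) :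
    Matrix (Fin n → Fin d) (Fin n → Fin d) ℂ :=
  Matrix.of fun f g => ∏ i, ρs i (f i) (g i)

/-- Noninteracting `N`-site Hamiltonian:
`h^{(N)} f g = Σ_{i<N} h (f i) (g i) · ∏_{j≠i} (if f j = g j then 1 else 0)`. -/
def hSum {d : ℕ} (h : Matrix (Fin d) (Fin d) ℂ) (N : ℕ) :
    Matrix (Fin N → Fin d) (Fin N → Fin d) ℂ :=
  Matrix.of fun f g =>
    ∑ i, h (f i) (g i) * ∏ j ∈ Finset.univ.erase i, (if f j = g j then (1:ℂ) else 0)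

/-- The ampliation `Λ ⊗ id_k` of a linear map on `d × d` matrices. -/
def Ampliation {d : ℕ} (Λ : Matrix (Fin d) (Fin d) ℂ →ₗ[ℂ] Matrix (Fin d) (Fin d) ℂ)
    (k : ℕ) (M : Matrix (Fin d × Fin k) (Fin d × Fin k) ℂ) :
    Matrix (Fin d × Fin k) (Fin d × Fin k) ℂ :=
  Matrix.of fun p q => Λ (Matrix.of fun i' j' => M (i', p.2) (j', q.2)) p.1 q.1

/-- A quantum channel: a ℂ-linear, trace-preserving, completely positive map. -/
def IsChannel {d : ℕ} (Λ : Matrix (Fin d) (Fin d) ℂ →ₗ[ℂ] Matrix (Fin d) (Fin d) ℂ) : Prop :=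
  (∀ M, (Λ M).trace = M.trace) ∧
  ∀ k : ℕ, ∀ M : Matrix (Fin d × Fin k) (Fin d × Fin k) ℂ,
    M.PosSemidef → (Ampliation Λ k M).PosSemidef

/-- Local ergotropy of an `n`-site state: the supremum is restricted to
product unitaries `U₁ ⊗ ⋯ ⊗ Uₙ`. -/
def locErgo {d n : ℕ} (σ H : Matrix (Fin n → Fin d) (Fin n → Fin d) ℂ) : ℝ :=
  ⨆ U : Fin n → Matrix.unitaryGroup (Fin d) ℂ,
    ((σ * H).trace.re -
      ((prodMat fun i => (U i : Matrix (Fin d) (Fin d) ℂ)) * σ *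
        star (prodMat fun i => (U i : Matrix (Fin d) (Fin d) ℂ)) * H).trace.re)

/-- Von Neumann entropy `S(σ) = Σ_i −λ_i log λ_i` of a Hermitian matrix. -/
def vnEntropy {n : Type*} [Fintype n] [DecidableEq n]
    {σ : Matrix n n ℂ} (hσ : σ.IsHermitian) : ℝ :=
  ∑ i, Real.negMulLog (hσ.eigenvalues i)

/-- `i`-th single-site reduced density matrix of an `n`-site state. -/
def red {d n : ℕ} (ρ : Matrix (Fin n → Fin d) (Fin n → Fin d) ℂ) (i : Fin n) :
    Matrix (Fin d) (Fin d) ℂ :=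
  Matrix.of fun a b =>
    ∑ f ∈ Finset.univ.filter (fun f : Fin n → Fin d => f i = a), ρ f (Function.update f i b)

/-- Separability: `ρ` is a convex combination of product density matrices. -/
def SepState {d n : ℕ} (ρ : Matrix (Fin n → Fin d) (Fin n → Fin d) ℂ) : Prop :=
  ∃ (m : ℕ) (p : Fin m → ℝ) (σs : Fin m → Fin n → Matrix (Fin d) (Fin d) ℂ),
    (∀ k, 0 ≤ p k) ∧ (∑ k, p k = 1) ∧ (∀ k i, IsDensity (σs k i)) ∧
    ρ = ∑ k, (p k : ℂ) • prodMat (σs k)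

/-- Total ergotropy `ℰ_tot(σ;h) = ⨆_{N≥1} ℰ(σ^{⊗N}; h^{(N)})/N`. -/
def Etot {d : ℕ} (σ h : Matrix (Fin d) (Fin d) ℂ) : ℝ :=
  ⨆ N : ℕ+, ergo (tpow σ (N:ℕ)) (hSum h (N:ℕ)) / (N:ℕ)

/-- Largest eigenvalue of a Hermitian matrix. -/
def lamMax {d : ℕ} {h : Matrix (Fin d) (Fin d) ℂ} (hh : h.IsHermitian) : ℝ :=
  ⨆ i, hh.eigenvalues i

/-- Single-shot energy-constrained maximal output ergotropy `ℰ^{(1)}(Λ;e)`. -/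
def E1 {d : ℕ} (Λ : Matrix (Fin d) (Fin d) ℂ →ₗ[ℂ] Matrix (Fin d) (Fin d) ℂ)
    (h : Matrix (Fin d) (Fin d) ℂ) (e : ℝ) : ℝ :=
  sSup {x | ∃ ρ : Matrix (Fin d) (Fin d) ℂ,
    IsDensity ρ ∧ (ρ * h).trace.re ≤ e ∧ x = ergo (Λ ρ) h}

/-- Single-shot energy-constrained maximal output total ergotropy `ℰ_tot^{(1)}(Λ;e)`. -/
def E1tot {d : ℕ} (Λ : Matrix (Fin d) (Fin d) ℂ →ₗ[ℂ] Matrix (Fin d) (Fin d) ℂ)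
    (h : Matrix (Fin d) (Fin d) ℂ) (e : ℝ) : ℝ :=
  sSup {x | ∃ ρ : Matrix (Fin d) (Fin d) ℂ,
    IsDensity ρ ∧ (ρ * h).trace.re ≤ e ∧ x = Etot (Λ ρ) h}

/-- `χ(Λ;e)`: supremum of `Σ_j p_j ℰ^{(1)}(Λ;e_j)` over finite probability vectors
`(p_j)` and energies `e_j ∈ [0, lmax]` with `Σ_j p_j e_j ≤ e`. -/
def chi {d : ℕ} (Λ : Matrix (Fin d) (Fin d) ℂ →ₗ[ℂ] Matrix (Fin d) (Fin d) ℂ)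
    (h : Matrix (Fin d) (Fin d) ℂ) (lmax e : ℝ) : ℝ :=
  sSup {x | ∃ (m : ℕ) (p ev : Fin m → ℝ),
    (∀ j, 0 ≤ p j) ∧ (∑ j, p j = 1) ∧ (∀ j, ev j ∈ Set.Icc (0:ℝ) lmax) ∧
    (∑ j, p j * ev j ≤ e) ∧ x = ∑ j, p j * E1 Λ h (ev j)}

/-- `χ_tot(Λ;e)`: as `χ` but with the total ergotropy. -/
def chiTot {d : ℕ} (Λ : Matrix (Fin d) (Fin d) ℂ →ₗ[ℂ] Matrix (Fin d) (Fin d) ℂ)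
    (h : Matrix (Fin d) (Fin d) ℂ) (lmax e : ℝ) : ℝ :=
  sSup {x | ∃ (m : ℕ) (p ev : Fin m → ℝ),
    (∀ j, 0 ≤ p j) ∧ (∑ j, p j = 1) ∧ (∀ j, ev j ∈ Set.Icc (0:ℝ) lmax) ∧
    (∑ j, p j * ev j ≤ e) ∧ x = ∑ j, p j * E1tot Λ h (ev j)}

/-- `ℰ_loc^{(n)}(Λ;E)`. -/
def ElocN {d : ℕ}
    (Λfam : ∀ n : ℕ, Matrix (Fin n → Fin d) (Fin n → Fin d) ℂ →ₗ[ℂ]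
      Matrix (Fin n → Fin d) (Fin n → Fin d) ℂ)
    (h : Matrix (Fin d) (Fin d) ℂ) (n : ℕ) (E : ℝ) : ℝ :=
  sSup {x | ∃ ρ : Matrix (Fin n → Fin d) (Fin n → Fin d) ℂ,
    IsDensity ρ ∧ (ρ * hSum h n).trace.re ≤ E ∧ x = locErgo (Λfam n ρ) (hSum h n)}

/-- `ℰ_{loc,sep}^{(n)}(Λ;E)`. -/
def ElocSepN {d : ℕ}
    (Λfam : ∀ n : ℕ, Matrix (Fin n → Fin d) (Fin n → Fin d) ℂ →ₗ[ℂ]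
      Matrix (Fin n → Fin d) (Fin n → Fin d) ℂ)
    (h : Matrix (Fin d) (Fin d) ℂ) (n : ℕ) (E : ℝ) : ℝ :=
  sSup {x | ∃ ρ : Matrix (Fin n → Fin d) (Fin n → Fin d) ℂ,
    IsDensity ρ ∧ SepState ρ ∧ (ρ * hSum h n).trace.re ≤ E ∧
    x = locErgo (Λfam n ρ) (hSum h n)}

/-- `ℰ_sep^{(n)}(Λ;E)`. -/
def EsepN {d : ℕ}
    (Λfam : ∀ n : ℕ, Matrix (Fin n → Fin d) (Fin n → Fin d) ℂ →ₗ[ℂ]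
      Matrix (Fin n → Fin d) (Fin n → Fin d) ℂ)
    (h : Matrix (Fin d) (Fin d) ℂ) (n : ℕ) (E : ℝ) : ℝ :=
  sSup {x | ∃ ρ : Matrix (Fin n → Fin d) (Fin n → Fin d) ℂ,
    IsDensity ρ ∧ SepState ρ ∧ (ρ * hSum h n).trace.re ≤ E ∧
    x = ergo (Λfam n ρ) (hSum h n)}

lemma prodMat_mul {d n : ℕ} (A B : Fin n → Matrix (Fin d) (Fin d) ℂ) :
    prodMat A * prodMat B = prodMat fun i => A i * B i := by
  ext f g
  simp only [prodMat, Matrix.mul_apply, Matrix.of_apply, Finset.prod_univ_sum,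
    Fintype.piFinset_univ, Finset.prod_mul_distrib]

lemma star_prodMat {d n : ℕ} (A : Fin n → Matrix (Fin d) (Fin d) ℂ) :
    star (prodMat A) = prodMat fun i => star (A i) := by
  ext f g
  simp [prodMat, Matrix.star_apply]

lemma trace_prodMat {d n : ℕ} (A : Fin n → Matrix (Fin d) (Fin d) ℂ) :
    (prodMat A).trace = ∏ i, (A i).trace := by
  simp only [prodMat, Matrix.trace, Matrix.diag_apply, Matrix.of_apply, Finset.prod_univ_sum,
    Fintype.piFinset_univ]

/-- The `i`-th summand of `h^{(n)}` is `1 ⊗ ⋯ ⊗ h ⊗ ⋯ ⊗ 1` with `h` at site `i`. -/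
lemma hSum_eq_sum_prodMat {d : ℕ} (h : Matrix (Fin d) (Fin d) ℂ) (n : ℕ) :
    hSum h n = ∑ i, prodMat (Function.update (fun _ : Fin n => 1) i h) := by
  ext f g
  rw [Matrix.sum_apply]
  simp only [hSum, prodMat, Matrix.of_apply]
  refine Finset.sum_congr rfl fun i _ => ?_
  rw [← Finset.mul_prod_erase Finset.univ _ (Finset.mem_univ i)]
  congr 1
  · simp
  · refine Finset.prod_congr rfl fun j hj => ?_
    rw [Function.update_of_ne (Finset.ne_of_mem_erase hj), Matrix.one_apply]

/-- Matrix units of the `n`-site space are product matrices. -/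
lemma single_eq_smul_prodMat {d n : ℕ} (f g : Fin n → Fin d) (x : ℂ) :
    Matrix.single f g x = x • prodMat fun i => Matrix.single (f i) (g i) (1 : ℂ) := by
  ext f' g'
  simp only [prodMat, Matrix.smul_apply, Matrix.of_apply, Matrix.single_apply, smul_eq_mul,
    Finset.prod_ite_zero, Finset.prod_const_one, Finset.mem_univ, true_implies]
  simp [funext_iff, forall_and]

lemma red_add {d n : ℕ} (ρ σ : Matrix (Fin n → Fin d) (Fin n → Fin d) ℂ) (i : Fin n) :
    red (ρ + σ) i = red ρ i + red σ i := by
  ext a b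
  simp [red, Finset.sum_add_distrib]

lemma red_smul {d n : ℕ} (c : ℂ) (ρ : Matrix (Fin n → Fin d) (Fin n → Fin d) ℂ) (i : Fin n) :
    red (c • ρ) i = c • red ρ i := by
  ext a b
  simp [red, Finset.mul_sum]

lemma red_prodMat {d n : ℕ} (A : Fin n → Matrix (Fin d) (Fin d) ℂ) (i : Fin n) :
    red (prodMat A) i = (∏ j ∈ Finset.univ.erase i, (A j).trace) • A i := by
  ext a b
  -- The constraint `f i = a` is absorbed into the factor at site `i`, so that the sum over `f`
  -- of the products becomes a product of sums over the individual sites.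
  let F : Fin n → Fin d → ℂ := fun j x =>
    if j = i then (if x = a then A i a b else 0) else A j x x
  have key : ∀ f : Fin n → Fin d,
      (if f i = a then ∏ j, A j (f j) (Function.update f i b j) else 0) = ∏ j, F j (f j) := by
    intro f
    rw [← Finset.mul_prod_erase Finset.univ (fun j => F j (f j)) (Finset.mem_univ i),
      ← Finset.mul_prod_erase Finset.univ _ (Finset.mem_univ i)]
    by_cases hf : f i = a
    · simp only [F, hf, if_true, Function.update_self]
      congr 1
      refine Finset.prod_congr rfl fun j hj => ?_
      have hji := Finset.ne_of_mem_erase hj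
      simp [hji]
    · simp [F, hf]
  simp only [red, prodMat, Matrix.of_apply, Finset.sum_filter, Matrix.smul_apply, smul_eq_mul]
  rw [Finset.sum_congr rfl fun f _ => key f]
  have hprod := Finset.prod_univ_sum (fun _ : Fin n => (Finset.univ : Finset (Fin d))) F
  rw [Fintype.piFinset_univ] at hprod
  rw [← hprod, ← Finset.mul_prod_erase Finset.univ _ (Finset.mem_univ i), mul_comm]
  congr 1
  · refine Finset.prod_congr rfl fun j hj => ?_
    have hji := Finset.ne_of_mem_erase hj
    simp [F, hji, Matrix.trace]
  · simp [F]

lemma trace_local_energy_prodMat {d n : ℕ}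
    (Λ : Matrix (Fin d) (Fin d) ℂ →ₗ[ℂ] Matrix (Fin d) (Fin d) ℂ)
    (hΛ : ∀ M, (Λ M).trace = M.trace) (h : Matrix (Fin d) (Fin d) ℂ)
    (U : Fin n → Matrix (Fin d) (Fin d) ℂ) (hU : ∀ i, star (U i) * U i = 1)
    (A : Fin n → Matrix (Fin d) (Fin d) ℂ) :
    (prodMat U * (prodMat fun i => Λ (A i)) * star (prodMat U) * hSum h n).trace =
      ∑ i, (U i * Λ (red (prodMat A) i) * star (U i) * h).trace := by
  rw [hSum_eq_sum_prodMat, Finset.mul_sum, Matrix.trace_sum]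
  refine Finset.sum_congr rfl fun i _ => ?_
  rw [star_prodMat, prodMat_mul, prodMat_mul, prodMat_mul, trace_prodMat, red_prodMat,
    ← Finset.mul_prod_erase Finset.univ _ (Finset.mem_univ i), mul_comm]
  simp only [map_smul, Matrix.mul_smul, Matrix.smul_mul, Matrix.trace_smul, smul_eq_mul,
    Function.update_self]
  congr 1
  refine Finset.prod_congr rfl fun j hj => ?_
  rw [Function.update_of_ne (Finset.ne_of_mem_erase hj), mul_one, Matrix.trace_mul_comm,
    ← mul_assoc, hU, one_mul, hΛ]

/-- The energy of the locally rotated output state is the sum of the energies of the rotated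
outputs of the single-site marginals. -/
lemma trace_local_energy {d n : ℕ}
    (Λ : Matrix (Fin d) (Fin d) ℂ →ₗ[ℂ] Matrix (Fin d) (Fin d) ℂ)
    (hΛ : ∀ M, (Λ M).trace = M.trace) (h : Matrix (Fin d) (Fin d) ℂ)
    (Λn : Matrix (Fin n → Fin d) (Fin n → Fin d) ℂ →ₗ[ℂ]
      Matrix (Fin n → Fin d) (Fin n → Fin d) ℂ)
    (hΛn : ∀ ρs : Fin n → Matrix (Fin d) (Fin d) ℂ,
      Λn (prodMat ρs) = prodMat fun i => Λ (ρs i))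
    (U : Fin n → Matrix (Fin d) (Fin d) ℂ) (hU : ∀ i, star (U i) * U i = 1)
    (ρ : Matrix (Fin n → Fin d) (Fin n → Fin d) ℂ) :
    (prodMat U * Λn ρ * star (prodMat U) * hSum h n).trace =
      ∑ i, (U i * Λ (red ρ i) * star (U i) * h).trace := by
  have hsmul : ∀ (c : ℂ) (A : Fin n → Matrix (Fin d) (Fin d) ℂ),
      (prodMat U * Λn (c • prodMat A) * star (prodMat U) * hSum h n).trace =
        ∑ i, (U i * Λ (red (c • prodMat A) i) * star (U i) * h).trace := by
    intro c A
    simp only [red_smul, map_smul, Matrix.mul_smul, Matrix.smul_mul, Matrix.trace_smul, hΛn,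
      trace_local_energy_prodMat Λ hΛ h U hU A, Finset.smul_sum]
  induction ρ using Matrix.induction_on' with
  | h_zero => simpa using hsmul 0 0
  | h_add p q hp hq =>
    simp only [map_add, red_add, mul_add, add_mul, Matrix.trace_add, hp, hq,
      Finset.sum_add_distrib]
  | h_std_basis f g x => rw [single_eq_smul_prodMat]; exact hsmul _ _

lemma bddAbove_ergo {d : ℕ} (σ h : Matrix (Fin d) (Fin d) ℂ) :
    BddAbove (Set.range fun U : Matrix.unitaryGroup (Fin d) ℂ =>
      (σ * h).trace.re -
        ((U : Matrix (Fin d) (Fin d) ℂ) * σ * star (U : Matrix (Fin d) (Fin d) ℂ) * h).trace.re) := by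
  refine ⟨(σ * h).trace.re + ∑ i, ∑ l, ∑ k, ∑ j, ‖σ j k‖ * ‖h l i‖, ?_⟩
  rintro _ ⟨U, rfl⟩
  have hb : ‖((U : Matrix (Fin d) (Fin d) ℂ) * σ * star (U : Matrix (Fin d) (Fin d) ℂ)
      * h).trace‖ ≤ ∑ i, ∑ l, ∑ k, ∑ j, ‖σ j k‖ * ‖h l i‖ := by
    simp only [Matrix.trace, Matrix.diag_apply, Matrix.mul_apply, Finset.sum_mul]
    refine norm_sum_le_of_le _ fun i _ => norm_sum_le_of_le _ fun l _ =>
      norm_sum_le_of_le _ fun k _ => norm_sum_le_of_le _ fun j _ => ?_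
    have h1 := entry_norm_bound_of_unitary U.2 i j
    have h2 := entry_norm_bound_of_unitary U.2 l k
    rw [norm_mul, norm_mul, norm_mul, Matrix.star_apply, norm_star]
    refine mul_le_mul_of_nonneg_right ?_ (norm_nonneg _)
    calc _ ≤ 1 * ‖σ j k‖ * 1 := by gcongr
      _ = ‖σ j k‖ := by ring
  have := (Complex.abs_re_le_norm _).trans hb
  simp only
  linarith [neg_abs_le ((U : Matrix (Fin d) (Fin d) ℂ) * σ *
    star (U : Matrix (Fin d) (Fin d) ℂ) * h).trace.re]

/-- The supremum of a sum of functions of independent variables is the sum of the suprema. -/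
lemma ciSup_pi_sum {n : ℕ} {α : Type*} [Nonempty α] (a : Fin n → α → ℝ)
    (ha : ∀ i, BddAbove (Set.range (a i))) :
    ⨆ U : Fin n → α, ∑ i, a i (U i) = ∑ i, ⨆ x, a i x := by
  have hle : ∀ U : Fin n → α, ∑ i, a i (U i) ≤ ∑ i, ⨆ x, a i x := fun U =>
    Finset.sum_le_sum fun i _ => le_ciSup (ha i) (U i)
  refine le_antisymm (ciSup_le hle) (le_of_forall_pos_le_add fun ε hε => ?_)
  -- The tuple of `ε / (n + 1)`-optimal points is `ε`-optimal; `n + 1` avoids dividing by zero.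
  have hδ : 0 < ε / (n + 1 : ℝ) := by positivity
  choose U hU using fun i => exists_lt_of_lt_ciSup (sub_lt_self (⨆ x, a i x) hδ)
  have h1 : ∑ i, a i (U i) ≤ ⨆ U : Fin n → α, ∑ i, a i (U i) :=
    le_ciSup (f := fun U : Fin n → α => ∑ i, a i (U i))
      ⟨_, by rintro _ ⟨V, rfl⟩; exact hle V⟩ U
  have h2 : ∑ i, ((⨆ x, a i x) - ε / (n + 1 : ℝ)) ≤ ∑ i, a i (U i) :=
    Finset.sum_le_sum fun i _ => (hU i).le
  have h3 : (n : ℝ) * (ε / (n + 1 : ℝ)) ≤ ε := by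
    rw [mul_div_assoc', div_le_iff₀ (by positivity)]
    nlinarith
  rw [Finset.sum_sub_distrib, Finset.sum_const, Finset.card_univ, Fintype.card_fin,
    nsmul_eq_mul] at h2
  linarith

theorem statement9 {d : ℕ}
    (Λ : Matrix (Fin d) (Fin d) ℂ →ₗ[ℂ] Matrix (Fin d) (Fin d) ℂ) (hΛ : IsChannel Λ)
    (h : Matrix (Fin d) (Fin d) ℂ) (hh : h.IsHermitian)
    (n : ℕ) (hn : 1 ≤ n)
    (ρ : Matrix (Fin n → Fin d) (Fin n → Fin d) ℂ) (hρ : IsDensity ρ)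
    (Λn : Matrix (Fin n → Fin d) (Fin n → Fin d) ℂ →ₗ[ℂ]
      Matrix (Fin n → Fin d) (Fin n → Fin d) ℂ)
    (hΛn : ∀ ρs : Fin n → Matrix (Fin d) (Fin d) ℂ,
      Λn (prodMat ρs) = prodMat fun i => Λ (ρs i)) :
    locErgo (Λn ρ) (hSum h n) = ∑ i, ergo (Λ (red ρ i)) h := by
  have hprod := trace_local_energy Λ hΛ.1 h Λn hΛn
  have hone : (prodMat fun _ : Fin n => (1 : Matrix (Fin d) (Fin d) ℂ)) = 1 := by
    ext f g
    simp [prodMat, Matrix.one_apply, Finset.prod_ite_zero, funext_iff]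
  -- The initial energy is the case of trivial local unitaries.
  have h0 : (Λn ρ * hSum h n).trace = ∑ i, (Λ (red ρ i) * h).trace := by
    simpa [hone] using hprod (fun _ => 1) (by simp) ρ
  simp only [locErgo, ergo]
  rw [← ciSup_pi_sum _ fun i => bddAbove_ergo (Λ (red ρ i)) h]
  refine iSup_congr fun U => ?_
  rw [h0, hprod (fun i => (U i : Matrix (Fin d) (Fin d) ℂ))
    (fun i => Matrix.mem_unitaryGroup_iff'.mp (U i).2) ρ, Complex.re_sum, Complex.re_sum,
    Finset.sum_sub_distrib]

end
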